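/- For every condition ψ in negation normal form and every 3VL valuation v, the 3VL value of ψ under v is T if and only if the absorbed 2VL evaluation of ψ under v is true. Consequently, a condition φ evaluates to T under a 3VL valuation v if and only if the absorbed 2VL evaluation under v of any negation-normal-form condition that is 3VL-equivalent to φ is true. -/

import Mathlib

/-- Truth values of Kleene's strong three-valued logic. -/
inductive TV where
  | T | F | U
deriving DecidableEq, Repr

/-- The order F < U < T, encoded numerically. -/
def TV.toNat : TV → ℕ
  | .F => 0
  | .U => 1
  | .T => 2

/-- Kleene negation: swaps T and F, fixes U. -/
def TV.neg : TV → TV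
  | .T => .F
  | .F => .T
  | .U => .U

/-- Kleene conjunction: minimum w.r.t. F < U < T. -/
def TV.and (a b : TV) : TV := if a.toNat ≤ b.toNat then a else b

/-- Kleene disjunction: maximum w.r.t. F < U < T. -/
def TV.or (a b : TV) : TV := if a.toNat ≤ b.toNat then b else a

/-- Conditions over a set `A` of atoms, built from atoms by ¬, ∧, ∨. -/
inductive Cond (A : Type) where
  | atom : A → Cond A
  | not : Cond A → Cond A
  | and : Cond A → Cond A → Cond A
  | or : Cond A → Cond A → Cond A

/-- The 3VL value of a condition under a valuation `v : A → TV`. -/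
def Cond.eval3 {A : Type} (v : A → TV) : Cond A → TV
  | .atom a => v a
  | .not c => (c.eval3 v).neg
  | .and c d => TV.and (c.eval3 v) (d.eval3 v)
  | .or c d => TV.or (c.eval3 v) (d.eval3 v)

/-- Negation normal form: negation occurs only directly in front of atoms. -/
inductive Cond.NNF {A : Type} : Cond A → Prop
  | atom (a : A) : Cond.NNF (.atom a)
  | natom (a : A) : Cond.NNF (.not (.atom a))
  | and {c d : Cond A} : Cond.NNF c → Cond.NNF d → Cond.NNF (.and c d)
  | or {c d : Cond A} : Cond.NNF c → Cond.NNF d → Cond.NNF (.or c d)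

/-- Size of a condition: total number of atom occurrences and connectives. -/
def Cond.size {A : Type} : Cond A → ℕ
  | .atom _ => 1
  | .not c => c.size + 1
  | .and c d => c.size + d.size + 1
  | .or c d => c.size + d.size + 1


/-- The absorbed 2VL evaluation of an NNF condition: an atom `a` is true iff
`v a = T`, a negated atom `¬a` is true iff `v a = F`, and ∧, ∨ are the
classical Boolean connectives.  (The value on non-NNF negations is
irrelevant.) -/
def Cond.eval2 {A : Type} (v : A → TV) : Cond A → Bool
  | .atom a => decide (v a = TV.T)
  | .not (.atom a) => decide (v a = TV.F)
  | .not _ => false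
  | .and c d => c.eval2 v && d.eval2 v
  | .or c d => c.eval2 v || d.eval2 v

namespace TV

theorem neg_eq_T_iff {a : TV} : a.neg = T ↔ a = F := by
  cases a <;> decide

theorem and_eq_T_iff {a b : TV} : a.and b = T ↔ a = T ∧ b = T := by
  cases a <;> cases b <;> decide

theorem or_eq_T_iff {a b : TV} : a.or b = T ↔ a = T ∨ b = T := by
  cases a <;> cases b <;> decide

end TV

/-- Testing for `T` commutes with ∧ and ∨, since `{T}` is a prime filter of the chain F < U < T,
but not with ¬, since it identifies `U` with `F`. In negation normal form, ¬ is confined to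
literals, where `eval2` tests for `F` instead. -/
theorem Cond.NNF.eval3_eq_T_iff_eval2 {A : Type} {ψ : Cond A} (hψ : ψ.NNF) (v : A → TV) :
    ψ.eval3 v = TV.T ↔ ψ.eval2 v = true := by
  induction hψ with
  | atom a => exact decide_eq_true_iff.symm
  | natom a => exact TV.neg_eq_T_iff.trans decide_eq_true_iff.symm
  | and _ _ ihc ihd =>
    simp only [Cond.eval3, Cond.eval2, TV.and_eq_T_iff, Bool.and_eq_true, ihc, ihd]
  | or _ _ ihc ihd =>
    simp only [Cond.eval3, Cond.eval2, TV.or_eq_T_iff, Bool.or_eq_true, ihc, ihd]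

/-- An NNF condition evaluates to T in 3VL iff its absorbed 2VL evaluation is
true; consequently a condition evaluates to T in 3VL iff the absorbed 2VL
evaluation of any 3VL-equivalent NNF condition is true. -/
theorem eval3_T_iff_absorbed_eval2 {A : Type} :
    (∀ ψ : Cond A, ψ.NNF → ∀ v : A → TV,
      (ψ.eval3 v = TV.T ↔ ψ.eval2 v = true)) ∧
    (∀ φ ψ : Cond A, ψ.NNF → (∀ v : A → TV, ψ.eval3 v = φ.eval3 v) →
      ∀ v : A → TV, (φ.eval3 v = TV.T ↔ ψ.eval2 v = true)) := by
  refine ⟨fun ψ hψ v => hψ.eval3_eq_T_iff_eval2 v, fun φ ψ hψ hequiv v => ?_⟩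
  rw [← hequiv v]
  exact hψ.eval3_eq_T_iff_eval2 v
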